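/- Let γ : ℝ × ℝ → ℝ² be a smooth family of regular plane curves with speed σ(t,s) := ‖∂_s γ(t,s)‖ > 0, unit tangent τ := σ⁻¹∂_sγ, unit normal n := (τ², −τ¹), signed curvature κ := (σ⁻¹∂_s n)·τ, evolution velocity u := ∂_t γ, and tangential derivative ∇_τ f := σ⁻¹∂_s f. Then for all (t,s): ∂_t∂_t κ = −∇_τ∇_τ(∂_t u · n) + (∇_τ κ)·(τ · ∂_t u) − κ²·(n · ∂_t u) + 2(∇_τ u · n)·(τ · ∇_τ∇_τ u) + 4(∇_τ u · τ)·(n · ∇_τ∇_τ u) + 6κ·(∇_τ u · τ)² − 3κ·(∇_τ u · n)². (Second-order evolution equation for the signed curvature under an arbitrary evolution velocity.) -/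

import Mathlib

/-- Dot product on `ℝ²`. -/
def dotp (a b : ℝ × ℝ) : ℝ := a.1 * b.1 + a.2 * b.2

/-- Partial derivative in the time variable of an `ℝ²`-valued function of `(t,s)`. -/
noncomputable def ptd (f : ℝ × ℝ → ℝ × ℝ) (q : ℝ × ℝ) : ℝ × ℝ :=
  deriv (fun t => f (t, q.2)) q.1

/-- Partial derivative in the parameter variable of an `ℝ²`-valued function of `(t,s)`. -/
noncomputable def psd (f : ℝ × ℝ → ℝ × ℝ) (q : ℝ × ℝ) : ℝ × ℝ :=
  deriv (fun s => f (q.1, s)) q.2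

/-- Partial derivative in the time variable of a scalar function of `(t,s)`. -/
noncomputable def ptds (f : ℝ × ℝ → ℝ) (q : ℝ × ℝ) : ℝ :=
  deriv (fun t => f (t, q.2)) q.1

/-- Partial derivative in the parameter variable of a scalar function of `(t,s)`. -/
noncomputable def psds (f : ℝ × ℝ → ℝ) (q : ℝ × ℝ) : ℝ :=
  deriv (fun s => f (q.1, s)) q.2

/-!
The curve carries the derivations `∂_t` and `∇_τ = σ⁻¹∂_s` and the orthonormal frame `(τ, n)`. Write
`u' = ∂_t u` for the acceleration, `A = ∇_τ u · τ` for the rate of stretching and `ω = ∂_t n · τ`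
for the angular velocity of the frame. As `τ` has unit length, `∇_τ n = κ τ`, `∇_τ τ = -κ n`
and likewise `∂_t n = ω τ`, `∂_t τ = -ω n`. Partial derivatives commute, so
`[∂_t, ∇_τ] = -A ∇_τ`; applied to `γ` this gives `ω = -∇_τ u · n`, and applied to `n` it gives
`∂_t κ = ∇_τ ω - κ A` (in terms of a tangent angle `θ`, the commutation applied to `κ = ∇_τ θ`,
`ω = ∂_t θ`). Differentiating once more leaves `∂_t ω = -∇_τ u' · n - 2 A ω` and
`∂_t A = ∇_τ u' · τ - A² + ω²`, and `-∇_τ(∇_τ u' · n)` is traded for `-∇_τ∇_τ(u' · n)` by the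
product rule.
-/

open scoped ContDiff

section Dotp

variable (a b c : ℝ × ℝ) (r : ℝ)

lemma dotp_comm : dotp a b = dotp b a := by
  simp only [dotp, mul_comm]

lemma dotp_add_left : dotp (a + b) c = dotp a c + dotp b c := by
  simp only [dotp, Prod.fst_add, Prod.snd_add]
  ring

lemma dotp_sub_left : dotp (a - b) c = dotp a c - dotp b c := by
  simp only [dotp, Prod.fst_sub, Prod.snd_sub]
  ring

lemma dotp_smul_left : dotp (r • a) b = r * dotp a b := by
  simp only [dotp, Prod.smul_fst, Prod.smul_snd, smul_eq_mul]
  ring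

lemma dotp_smul_right : dotp a (r • b) = r * dotp a b := by
  rw [dotp_comm, dotp_smul_left, dotp_comm]

/-- The clockwise quarter turn of the plane, which takes the unit tangent `τ` to the unit normal
`n = (τ², -τ¹)`. -/
def quarterTurn : ℝ × ℝ →L[ℝ] ℝ × ℝ :=
  (ContinuousLinearMap.snd ℝ ℝ ℝ).prod (-ContinuousLinearMap.fst ℝ ℝ ℝ)

lemma quarterTurn_apply : quarterTurn a = (a.2, -a.1) := rfl

lemma quarterTurn_quarterTurn : quarterTurn (quarterTurn a) = -a := rfl

lemma dotp_quarterTurn_left : dotp (quarterTurn a) b = -dotp a (quarterTurn b) := by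
  simp only [dotp, quarterTurn_apply]
  ring

lemma dotp_quarterTurn_self : dotp (quarterTurn a) a = 0 := by
  simp only [dotp, quarterTurn_apply]
  ring

lemma dotp_quarterTurn_quarterTurn : dotp (quarterTurn a) (quarterTurn b) = dotp a b := by
  simp only [dotp, quarterTurn_apply]
  ring

lemma eq_dotp_smul_add_dotp_quarterTurn_smul {e : ℝ × ℝ} (he : dotp e e = 1) (v : ℝ × ℝ) :
    v = dotp v e • e + dotp v (quarterTurn e) • quarterTurn e := by
  simp only [dotp] at he
  ext <;> simp only [dotp, quarterTurn_apply, Prod.fst_add, Prod.snd_add, Prod.smul_fst,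
    Prod.smul_snd, smul_eq_mul]
  · linear_combination -v.1 * he
  · linear_combination -v.2 * he

end Dotp

section Fderiv

variable {M : Type*} [NormedAddCommGroup M] [NormedSpace ℝ M] {f g : M → ℝ × ℝ} {x : M}

lemma contDiff_dotp {k : ℕ∞ω} (hf : ContDiff ℝ k f) (hg : ContDiff ℝ k g) :
    ContDiff ℝ k fun y => dotp (f y) (g y) :=
  (hf.fst.mul hg.fst).add (hf.snd.mul hg.snd)

lemma differentiableAt_dotp (hf : DifferentiableAt ℝ f x) (hg : DifferentiableAt ℝ g x) :
    DifferentiableAt ℝ (fun y => dotp (f y) (g y)) x :=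
  (hf.fst.mul hg.fst).add (hf.snd.mul hg.snd)

lemma fderiv_dotp_apply (hf : DifferentiableAt ℝ f x) (hg : DifferentiableAt ℝ g x) (v : M) :
    fderiv ℝ (fun y => dotp (f y) (g y)) x v
      = dotp (fderiv ℝ f x v) (g x) + dotp (f x) (fderiv ℝ g x v) := by
  have hdotp := (hf.hasFDerivAt.fst.mul hg.hasFDerivAt.fst).add
    (hf.hasFDerivAt.snd.mul hg.hasFDerivAt.snd)
  refine (DFunLike.congr_fun hdotp.fderiv v).trans ?_
  simp [dotp]
  ring

lemma fderiv_quarterTurn_apply (hf : DifferentiableAt ℝ f x) (v : M) :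
    fderiv ℝ (fun y => quarterTurn (f y)) x v = quarterTurn (fderiv ℝ f x v) :=
  DFunLike.congr_fun (quarterTurn.hasFDerivAt.comp x hf.hasFDerivAt).fderiv v

lemma dotp_fderiv_apply_eq_zero_of_dotp_self_eq_one (hf : DifferentiableAt ℝ f x)
    (hunit : ∀ y, dotp (f y) (f y) = 1) (v : M) : dotp (fderiv ℝ f x v) (f x) = 0 := by
  have hconst := fderiv_dotp_apply hf hf v
  simp only [hunit, fderiv_fun_const, Pi.zero_apply, zero_apply, dotp_comm (f x)] at hconst
  linarith

lemma fderiv_apply_eq_smul_quarterTurn (hf : DifferentiableAt ℝ f x)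
    (hunit : ∀ y, dotp (f y) (f y) = 1) (v : M) :
    fderiv ℝ f x v
      = -dotp (fderiv ℝ (fun y => quarterTurn (f y)) x v) (f x) • quarterTurn (f x) := by
  conv_lhs => rw [eq_dotp_smul_add_dotp_quarterTurn_smul (hunit x) (fderiv ℝ f x v)]
  rw [dotp_fderiv_apply_eq_zero_of_dotp_self_eq_one hf hunit, zero_smul, zero_add,
    fderiv_quarterTurn_apply hf, dotp_quarterTurn_left, neg_neg]

lemma fderiv_quarterTurn_apply_eq_smul (hf : DifferentiableAt ℝ f x)
    (hunit : ∀ y, dotp (f y) (f y) = 1) (v : M) :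
    fderiv ℝ (fun y => quarterTurn (f y)) x v
      = dotp (fderiv ℝ (fun y => quarterTurn (f y)) x v) (f x) • f x := by
  conv_lhs => rw [fderiv_quarterTurn_apply hf, fderiv_apply_eq_smul_quarterTurn hf hunit v]
  rw [map_smul, quarterTurn_quarterTurn, neg_smul_neg]

lemma fderiv_fderiv_apply_comm {E : Type*} [NormedAddCommGroup E] [NormedSpace ℝ E] {f : M → E}
    (hf : ContDiffAt ℝ 2 f x) (v w : M) :
    fderiv ℝ (fun y => fderiv ℝ f y v) x w = fderiv ℝ (fun y => fderiv ℝ f y w) x v := by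
  have hf' : DifferentiableAt ℝ (fderiv ℝ f) x :=
    (hf.fderiv_right (m := 1) (by norm_num)).differentiableAt one_ne_zero
  rw [fderiv_clm_apply hf' (differentiableAt_const _),
    fderiv_clm_apply hf' (differentiableAt_const _)]
  simpa using hf.isSymmSndFDerivAt (by simp) w v

end Fderiv

section PartialDerivatives

variable {E : Type*} [NormedAddCommGroup E] [NormedSpace ℝ E] {f : ℝ × ℝ → E} {q : ℝ × ℝ}

/-- The partial derivative `∂_t` at fixed `s` of a map `(t, s) ↦ f (t, s)` with values in a normed
space; `ptd` and `ptds` are its instances for `ℝ × ℝ` and `ℝ`. -/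
noncomputable def timeDeriv (f : ℝ × ℝ → E) (q : ℝ × ℝ) : E :=
  deriv (fun t => f (t, q.2)) q.1

/-- The partial derivative `∂_s` at fixed `t` of a map `(t, s) ↦ f (t, s)` with values in a normed
space; `psd` and `psds` are its instances for `ℝ × ℝ` and `ℝ`. -/
noncomputable def paramDeriv (f : ℝ × ℝ → E) (q : ℝ × ℝ) : E :=
  deriv (fun s => f (q.1, s)) q.2

lemma timeDeriv_eq_fderiv (hf : DifferentiableAt ℝ f q) : timeDeriv f q = fderiv ℝ f q (1, 0) :=
  (hf.hasFDerivAt.comp_hasDerivAt q.1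
    ((hasDerivAt_id q.1).prodMk (hasDerivAt_const q.1 q.2))).deriv

lemma paramDeriv_eq_fderiv (hf : DifferentiableAt ℝ f q) : paramDeriv f q = fderiv ℝ f q (0, 1) :=
  (hf.hasFDerivAt.comp_hasDerivAt q.2
    ((hasDerivAt_const q.2 q.1).prodMk (hasDerivAt_id q.2))).deriv

variable {m k : ℕ∞ω}

lemma contDiff_timeDeriv (hf : ContDiff ℝ k f) (hmk : m + 1 ≤ k) :
    ContDiff ℝ m (timeDeriv f) := by
  have hk : k ≠ 0 := by rintro rfl; simp at hmk
  rw [show timeDeriv f = _ from funext fun q => timeDeriv_eq_fderiv (hf.differentiable hk q)]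
  exact (hf.fderiv_right hmk).clm_apply contDiff_const

lemma contDiff_paramDeriv (hf : ContDiff ℝ k f) (hmk : m + 1 ≤ k) :
    ContDiff ℝ m (paramDeriv f) := by
  have hk : k ≠ 0 := by rintro rfl; simp at hmk
  rw [show paramDeriv f = _ from funext fun q => paramDeriv_eq_fderiv (hf.differentiable hk q)]
  exact (hf.fderiv_right hmk).clm_apply contDiff_const

lemma timeDeriv_paramDeriv_comm (hf : ContDiff ℝ 2 f) (q : ℝ × ℝ) :
    timeDeriv (paramDeriv f) q = paramDeriv (timeDeriv f) q := by
  have hf' := hf.differentiable two_ne_zero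
  have htime : ContDiff ℝ 1 (timeDeriv f) := contDiff_timeDeriv hf (by norm_num)
  have hparam : ContDiff ℝ 1 (paramDeriv f) := contDiff_paramDeriv hf (by norm_num)
  rw [timeDeriv_eq_fderiv (hparam.differentiable one_ne_zero q),
    paramDeriv_eq_fderiv (htime.differentiable one_ne_zero q),
    show paramDeriv f = _ from funext fun q => paramDeriv_eq_fderiv (hf' q),
    show timeDeriv f = _ from funext fun q => timeDeriv_eq_fderiv (hf' q),
    fderiv_fderiv_apply_comm hf.contDiffAt]

lemma timeDeriv_neg (f : ℝ × ℝ → E) (q : ℝ × ℝ) :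
    timeDeriv (fun q' => -f q') q = -timeDeriv f q :=
  deriv.fun_neg

lemma timeDeriv_sub {g : ℝ × ℝ → E} (hf : DifferentiableAt ℝ f q) (hg : DifferentiableAt ℝ g q) :
    timeDeriv (fun q' => f q' - g q') q = timeDeriv f q - timeDeriv g q := by
  rw [timeDeriv_eq_fderiv (hf.fun_sub hg), timeDeriv_eq_fderiv hf, timeDeriv_eq_fderiv hg,
    fderiv_fun_sub hf hg, sub_apply]

lemma timeDeriv_smul {φ : ℝ × ℝ → ℝ} (hφ : DifferentiableAt ℝ φ q)
    (hf : DifferentiableAt ℝ f q) :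
    timeDeriv (fun q' => φ q' • f q') q = timeDeriv φ q • f q + φ q • timeDeriv f q := by
  rw [timeDeriv_eq_fderiv (hφ.fun_smul hf), timeDeriv_eq_fderiv hφ, timeDeriv_eq_fderiv hf,
    fderiv_fun_smul hφ hf]
  simp [add_comm]

lemma timeDeriv_mul {φ ψ : ℝ × ℝ → ℝ} (hφ : DifferentiableAt ℝ φ q)
    (hψ : DifferentiableAt ℝ ψ q) :
    timeDeriv (fun q' => φ q' * ψ q') q = timeDeriv φ q * ψ q + φ q * timeDeriv ψ q :=
  timeDeriv_smul hφ hψ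

lemma timeDeriv_dotp {f g : ℝ × ℝ → ℝ × ℝ} (hf : DifferentiableAt ℝ f q)
    (hg : DifferentiableAt ℝ g q) :
    timeDeriv (fun q' => dotp (f q') (g q')) q
      = dotp (timeDeriv f q) (g q) + dotp (f q) (timeDeriv g q) := by
  rw [timeDeriv_eq_fderiv (differentiableAt_dotp hf hg), timeDeriv_eq_fderiv hf,
    timeDeriv_eq_fderiv hg, fderiv_dotp_apply hf hg]

end PartialDerivatives

namespace EvolvingCurve

/-- The speed `σ = ‖∂_s γ‖`. The Euclidean norm is spelled out because the norm of `ℝ × ℝ` is the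
sup norm. -/
noncomputable def speed (γ : ℝ × ℝ → ℝ × ℝ) (q : ℝ × ℝ) : ℝ :=
  Real.sqrt ((paramDeriv γ q).1 ^ 2 + (paramDeriv γ q).2 ^ 2)

/-- The derivative `∇_τ = σ⁻¹ ∂_s` with respect to arc length along `γ`, where `∇_τ f = 0` if
`σ = 0`. -/
noncomputable def tangentialDeriv {E : Type*} [NormedAddCommGroup E] [NormedSpace ℝ E]
    (γ : ℝ × ℝ → ℝ × ℝ) (f : ℝ × ℝ → E) (q : ℝ × ℝ) : E :=
  (speed γ q)⁻¹ • paramDeriv f q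

/-- The unit tangent `τ = ∇_τ γ`. -/
noncomputable def unitTangent (γ : ℝ × ℝ → ℝ × ℝ) (q : ℝ × ℝ) : ℝ × ℝ :=
  tangentialDeriv γ γ q

/-- The unit normal `n = (τ², -τ¹)`, of which `τ` is the counterclockwise quarter turn. -/
noncomputable def unitNormal (γ : ℝ × ℝ → ℝ × ℝ) (q : ℝ × ℝ) : ℝ × ℝ :=
  quarterTurn (unitTangent γ q)

/-- The signed curvature `κ = ∇_τ n · τ`, positive where a counterclockwise curve is convex. -/
noncomputable def curvature (γ : ℝ × ℝ → ℝ × ℝ) (q : ℝ × ℝ) : ℝ :=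
  dotp (tangentialDeriv γ (unitNormal γ) q) (unitTangent γ q)

/-- The evolution velocity `u = ∂_t γ`. -/
noncomputable def velocity (γ : ℝ × ℝ → ℝ × ℝ) : ℝ × ℝ → ℝ × ℝ :=
  timeDeriv γ

/-- The angular velocity `ω = ∂_t n · τ` of the moving frame, counted counterclockwise: the
analogue of `κ = ∇_τ n · τ` for `∂_t`. -/
noncomputable def rotationRate (γ : ℝ × ℝ → ℝ × ℝ) (q : ℝ × ℝ) : ℝ :=
  dotp (timeDeriv (unitNormal γ) q) (unitTangent γ q)

/-- The relative rate `∇_τ u · τ` at which the evolution stretches the curve. -/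
noncomputable def stretchRate (γ : ℝ × ℝ → ℝ × ℝ) (q : ℝ × ℝ) : ℝ :=
  dotp (tangentialDeriv γ (velocity γ) q) (unitTangent γ q)

variable {γ : ℝ × ℝ → ℝ × ℝ} {q : ℝ × ℝ} {m k : ℕ∞ω}

section Regularity

lemma contDiff_speed (hγ : ContDiff ℝ k γ) (hreg : ∀ q, 0 < speed γ q) (hmk : m + 1 ≤ k) :
    ContDiff ℝ m (speed γ) := by
  have hγs : ContDiff ℝ m (paramDeriv γ) := contDiff_paramDeriv hγ hmk
  exact ((hγs.fst.pow 2).add (hγs.snd.pow 2)).sqrt fun q => (Real.sqrt_pos.mp (hreg q)).ne'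

lemma contDiff_tangentialDeriv {E : Type*} [NormedAddCommGroup E] [NormedSpace ℝ E]
    {f : ℝ × ℝ → E} (hγ : ContDiff ℝ k γ) (hreg : ∀ q, 0 < speed γ q) (hf : ContDiff ℝ k f)
    (hmk : m + 1 ≤ k) : ContDiff ℝ m (tangentialDeriv γ f) :=
  ((contDiff_speed hγ hreg hmk).inv fun q => (hreg q).ne').smul (contDiff_paramDeriv hf hmk)

lemma contDiff_unitTangent (hγ : ContDiff ℝ k γ) (hreg : ∀ q, 0 < speed γ q) (hmk : m + 1 ≤ k) :
    ContDiff ℝ m (unitTangent γ) :=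
  contDiff_tangentialDeriv hγ hreg hγ hmk

lemma contDiff_unitNormal (hγ : ContDiff ℝ k γ) (hreg : ∀ q, 0 < speed γ q) (hmk : m + 1 ≤ k) :
    ContDiff ℝ m (unitNormal γ) :=
  quarterTurn.contDiff.comp (contDiff_unitTangent hγ hreg hmk)

lemma contDiff_velocity (hγ : ContDiff ℝ k γ) (hmk : m + 1 ≤ k) : ContDiff ℝ m (velocity γ) :=
  contDiff_timeDeriv hγ hmk

lemma contDiff_tangentialDeriv_velocity (hγ : ContDiff ℝ k γ) (hreg : ∀ q, 0 < speed γ q)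
    (hmk : m + 2 ≤ k) : ContDiff ℝ m (tangentialDeriv γ (velocity γ)) := by
  have hmk' : m + 1 + 1 ≤ k := by rwa [add_assoc, one_add_one_eq_two]
  exact contDiff_tangentialDeriv (hγ.of_le (le_self_add.trans hmk')) hreg
    (contDiff_velocity hγ hmk') le_rfl

lemma contDiff_curvature (hγ : ContDiff ℝ k γ) (hreg : ∀ q, 0 < speed γ q) (hmk : m + 2 ≤ k) :
    ContDiff ℝ m (curvature γ) := by
  have hmk' : m + 1 + 1 ≤ k := by rwa [add_assoc, one_add_one_eq_two]
  have hγ' : ContDiff ℝ (m + 1) γ := hγ.of_le (le_self_add.trans hmk')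
  exact contDiff_dotp (contDiff_tangentialDeriv hγ' hreg (contDiff_unitNormal hγ hreg hmk') le_rfl)
    (contDiff_unitTangent hγ' hreg le_rfl)

lemma contDiff_rotationRate (hγ : ContDiff ℝ k γ) (hreg : ∀ q, 0 < speed γ q) (hmk : m + 2 ≤ k) :
    ContDiff ℝ m (rotationRate γ) := by
  have hmk' : m + 1 + 1 ≤ k := by rwa [add_assoc, one_add_one_eq_two]
  have hγ' : ContDiff ℝ (m + 1) γ := hγ.of_le (le_self_add.trans hmk')
  exact contDiff_dotp (contDiff_timeDeriv (contDiff_unitNormal hγ hreg hmk') le_rfl)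
    (contDiff_unitTangent hγ' hreg le_rfl)

lemma contDiff_stretchRate (hγ : ContDiff ℝ k γ) (hreg : ∀ q, 0 < speed γ q) (hmk : m + 2 ≤ k) :
    ContDiff ℝ m (stretchRate γ) := by
  have hmk' : m + 1 + 1 ≤ k := by rwa [add_assoc, one_add_one_eq_two]
  exact contDiff_dotp (contDiff_tangentialDeriv_velocity hγ hreg hmk)
    (contDiff_unitTangent (hγ.of_le (le_self_add.trans hmk')) hreg le_rfl)

end Regularity

section TangentialDeriv

variable {E : Type*} [NormedAddCommGroup E] [NormedSpace ℝ E] {f g : ℝ × ℝ → E}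

lemma tangentialDeriv_eq_fderiv (hf : DifferentiableAt ℝ f q) :
    tangentialDeriv γ f q = fderiv ℝ f q ((speed γ q)⁻¹ • (0, 1)) := by
  rw [tangentialDeriv, paramDeriv_eq_fderiv hf, map_smul]

lemma tangentialDeriv_neg (γ : ℝ × ℝ → ℝ × ℝ) (f : ℝ × ℝ → E) (q : ℝ × ℝ) :
    tangentialDeriv γ (fun q' => -f q') q = -tangentialDeriv γ f q := by
  simp only [tangentialDeriv, paramDeriv, deriv.fun_neg, smul_neg]

lemma tangentialDeriv_add (hf : DifferentiableAt ℝ f q) (hg : DifferentiableAt ℝ g q) :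
    tangentialDeriv γ (fun q' => f q' + g q') q
      = tangentialDeriv γ f q + tangentialDeriv γ g q := by
  rw [tangentialDeriv_eq_fderiv (hf.fun_add hg), tangentialDeriv_eq_fderiv hf,
    tangentialDeriv_eq_fderiv hg, fderiv_fun_add hf hg, add_apply]

lemma tangentialDeriv_smul {φ : ℝ × ℝ → ℝ} (hφ : DifferentiableAt ℝ φ q)
    (hf : DifferentiableAt ℝ f q) :
    tangentialDeriv γ (fun q' => φ q' • f q') q
      = tangentialDeriv γ φ q • f q + φ q • tangentialDeriv γ f q := by
  rw [tangentialDeriv_eq_fderiv (hφ.fun_smul hf), tangentialDeriv_eq_fderiv hφ,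
    tangentialDeriv_eq_fderiv hf, fderiv_fun_smul hφ hf]
  simp [add_comm]

lemma tangentialDeriv_mul {φ ψ : ℝ × ℝ → ℝ} (hφ : DifferentiableAt ℝ φ q)
    (hψ : DifferentiableAt ℝ ψ q) :
    tangentialDeriv γ (fun q' => φ q' * ψ q') q
      = tangentialDeriv γ φ q * ψ q + φ q * tangentialDeriv γ ψ q :=
  tangentialDeriv_smul hφ hψ

lemma tangentialDeriv_const_mul (c : ℝ) (φ : ℝ × ℝ → ℝ) :
    tangentialDeriv γ (fun q' => c * φ q') q = c * tangentialDeriv γ φ q := by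
  simp only [tangentialDeriv, paramDeriv, deriv_const_mul_field', smul_eq_mul, mul_left_comm]

lemma tangentialDeriv_dotp {f g : ℝ × ℝ → ℝ × ℝ} (hf : DifferentiableAt ℝ f q)
    (hg : DifferentiableAt ℝ g q) :
    tangentialDeriv γ (fun q' => dotp (f q') (g q')) q
      = dotp (tangentialDeriv γ f q) (g q) + dotp (f q) (tangentialDeriv γ g q) := by
  rw [tangentialDeriv_eq_fderiv (differentiableAt_dotp hf hg), tangentialDeriv_eq_fderiv hf,
    tangentialDeriv_eq_fderiv hg, fderiv_dotp_apply hf hg]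

end TangentialDeriv

section Frame

lemma speed_smul_tangentialDeriv {E : Type*} [NormedAddCommGroup E] [NormedSpace ℝ E]
    (hq : 0 < speed γ q) (f : ℝ × ℝ → E) :
    speed γ q • tangentialDeriv γ f q = paramDeriv f q :=
  smul_inv_smul₀ hq.ne' _

lemma dotp_unitTangent_self (hq : 0 < speed γ q) :
    dotp (unitTangent γ q) (unitTangent γ q) = 1 := by
  have hsq : speed γ q ^ 2 = dotp (paramDeriv γ q) (paramDeriv γ q) := by
    rw [speed, Real.sq_sqrt (by positivity), dotp, sq, sq]
  rw [unitTangent, tangentialDeriv, dotp_smul_left, dotp_smul_right, ← hsq]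
  field_simp

lemma dotp_unitNormal_self (hq : 0 < speed γ q) :
    dotp (unitNormal γ q) (unitNormal γ q) = 1 :=
  (dotp_quarterTurn_quarterTurn _ _).trans (dotp_unitTangent_self hq)

lemma dotp_unitNormal_unitTangent (γ : ℝ × ℝ → ℝ × ℝ) (q : ℝ × ℝ) :
    dotp (unitNormal γ q) (unitTangent γ q) = 0 :=
  dotp_quarterTurn_self _

lemma dotp_unitTangent_unitNormal (γ : ℝ × ℝ → ℝ × ℝ) (q : ℝ × ℝ) :
    dotp (unitTangent γ q) (unitNormal γ q) = 0 :=
  (dotp_comm _ _).trans (dotp_unitNormal_unitTangent γ q)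

lemma differentiable_unitTangent (hγ : ContDiff ℝ 2 γ) (hreg : ∀ q, 0 < speed γ q) :
    Differentiable ℝ (unitTangent γ) :=
  (contDiff_unitTangent (m := 1) hγ hreg (by norm_num)).differentiable one_ne_zero

lemma differentiable_unitNormal (hγ : ContDiff ℝ 2 γ) (hreg : ∀ q, 0 < speed γ q) :
    Differentiable ℝ (unitNormal γ) :=
  (contDiff_unitNormal (m := 1) hγ hreg (by norm_num)).differentiable one_ne_zero

lemma tangentialDeriv_unitNormal (hγ : ContDiff ℝ 2 γ) (hreg : ∀ q, 0 < speed γ q) (q : ℝ × ℝ) :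
    tangentialDeriv γ (unitNormal γ) q = curvature γ q • unitTangent γ q := by
  rw [curvature, tangentialDeriv_eq_fderiv (differentiable_unitNormal hγ hreg q)]
  exact fderiv_quarterTurn_apply_eq_smul (differentiable_unitTangent hγ hreg q)
    (fun q' => dotp_unitTangent_self (hreg q')) _

lemma tangentialDeriv_unitTangent (hγ : ContDiff ℝ 2 γ) (hreg : ∀ q, 0 < speed γ q) (q : ℝ × ℝ) :
    tangentialDeriv γ (unitTangent γ) q = -curvature γ q • unitNormal γ q := by
  rw [curvature, tangentialDeriv_eq_fderiv (differentiable_unitTangent hγ hreg q),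
    tangentialDeriv_eq_fderiv (differentiable_unitNormal hγ hreg q)]
  exact fderiv_apply_eq_smul_quarterTurn (differentiable_unitTangent hγ hreg q)
    (fun q' => dotp_unitTangent_self (hreg q')) _

lemma timeDeriv_unitNormal (hγ : ContDiff ℝ 2 γ) (hreg : ∀ q, 0 < speed γ q) (q : ℝ × ℝ) :
    timeDeriv (unitNormal γ) q = rotationRate γ q • unitTangent γ q := by
  rw [rotationRate, timeDeriv_eq_fderiv (differentiable_unitNormal hγ hreg q)]
  exact fderiv_quarterTurn_apply_eq_smul (differentiable_unitTangent hγ hreg q)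
    (fun q' => dotp_unitTangent_self (hreg q')) _

lemma timeDeriv_unitTangent (hγ : ContDiff ℝ 2 γ) (hreg : ∀ q, 0 < speed γ q) (q : ℝ × ℝ) :
    timeDeriv (unitTangent γ) q = -rotationRate γ q • unitNormal γ q := by
  rw [rotationRate, timeDeriv_eq_fderiv (differentiable_unitTangent hγ hreg q),
    timeDeriv_eq_fderiv (differentiable_unitNormal hγ hreg q)]
  exact fderiv_apply_eq_smul_quarterTurn (differentiable_unitTangent hγ hreg q)
    (fun q' => dotp_unitTangent_self (hreg q')) _

lemma paramDeriv_timeDeriv_eq_add {E : Type*} [NormedAddCommGroup E] [NormedSpace ℝ E]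
    {f : ℝ × ℝ → E} (hγ : ContDiff ℝ 2 γ) (hreg : ∀ q, 0 < speed γ q) (hf : ContDiff ℝ 2 f)
    (q : ℝ × ℝ) :
    paramDeriv (timeDeriv f) q = timeDeriv (speed γ) q • tangentialDeriv γ f q
      + speed γ q • timeDeriv (tangentialDeriv γ f) q := by
  have hσ : ContDiff ℝ 1 (speed γ) := contDiff_speed hγ hreg (by norm_num)
  have hf' : ContDiff ℝ 1 (tangentialDeriv γ f) :=
    contDiff_tangentialDeriv hγ hreg hf (by norm_num)
  have hparam : paramDeriv f = fun q' => speed γ q' • tangentialDeriv γ f q' :=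
    funext fun q' => (speed_smul_tangentialDeriv (hreg q') f).symm
  rw [← timeDeriv_paramDeriv_comm hf, hparam, timeDeriv_smul (hσ.differentiable one_ne_zero q)
    (hf'.differentiable one_ne_zero q)]

/-- The component along `τ` of `∂_s u = ∂_t (σ τ)`. -/
lemma timeDeriv_speed (hγ : ContDiff ℝ 2 γ) (hreg : ∀ q, 0 < speed γ q) (q : ℝ × ℝ) :
    timeDeriv (speed γ) q = speed γ q * stretchRate γ q := by
  have hvel : paramDeriv (velocity γ) q = timeDeriv (speed γ) q • unitTangent γ q
      + speed γ q • timeDeriv (unitTangent γ) q :=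
    paramDeriv_timeDeriv_eq_add hγ hreg hγ q
  rw [stretchRate, ← dotp_smul_left, speed_smul_tangentialDeriv (hreg q), hvel,
    timeDeriv_unitTangent hγ hreg, dotp_add_left]
  simp only [dotp_smul_left, dotp_unitTangent_self (hreg q), dotp_unitNormal_unitTangent]
  ring

lemma timeDeriv_tangentialDeriv {E : Type*} [NormedAddCommGroup E] [NormedSpace ℝ E]
    {f : ℝ × ℝ → E} (hγ : ContDiff ℝ 2 γ) (hreg : ∀ q, 0 < speed γ q) (hf : ContDiff ℝ 2 f)
    (q : ℝ × ℝ) :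
    timeDeriv (tangentialDeriv γ f) q
      = tangentialDeriv γ (timeDeriv f) q - stretchRate γ q • tangentialDeriv γ f q := by
  apply smul_right_injective E (hreg q).ne'
  simp only [smul_sub, speed_smul_tangentialDeriv (hreg q) (timeDeriv f), smul_smul,
    ← timeDeriv_speed hγ hreg q]
  rw [paramDeriv_timeDeriv_eq_add hγ hreg hf, add_sub_cancel_left]

/-- The component along `n` of `∂_t τ = ∂_t ∇_τ γ`. -/
lemma rotationRate_eq_neg_dotp (hγ : ContDiff ℝ 2 γ) (hreg : ∀ q, 0 < speed γ q) (q : ℝ × ℝ) :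
    rotationRate γ q = -dotp (tangentialDeriv γ (velocity γ) q) (unitNormal γ q) := by
  have hframe : -rotationRate γ q • unitNormal γ q
      = tangentialDeriv γ (velocity γ) q - stretchRate γ q • unitTangent γ q :=
    (timeDeriv_unitTangent hγ hreg q).symm.trans (timeDeriv_tangentialDeriv hγ hreg hγ q)
  have hnormal := congrArg (dotp · (unitNormal γ q)) hframe
  simp only [dotp_sub_left, dotp_smul_left, dotp_unitNormal_self (hreg q),
    dotp_unitTangent_unitNormal] at hnormal
  linarith

end Frame

section Evolution

lemma tangentialDeriv_stretchRate (hγ : ContDiff ℝ 3 γ) (hreg : ∀ q, 0 < speed γ q)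
    (q : ℝ × ℝ) :
    tangentialDeriv γ (stretchRate γ) q
      = dotp (unitTangent γ q) (tangentialDeriv γ (tangentialDeriv γ (velocity γ)) q)
        + curvature γ q * rotationRate γ q := by
  have hγ₂ : ContDiff ℝ 2 γ := hγ.of_le (by norm_num)
  have hu : ContDiff ℝ 1 (tangentialDeriv γ (velocity γ)) :=
    contDiff_tangentialDeriv_velocity hγ hreg (by norm_num)
  refine (tangentialDeriv_dotp (hu.differentiable one_ne_zero q)
    (differentiable_unitTangent hγ₂ hreg q)).trans ?_
  rw [tangentialDeriv_unitTangent hγ₂ hreg, rotationRate_eq_neg_dotp hγ₂ hreg, dotp_smul_right,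
    dotp_comm (unitTangent γ q)]
  ring

lemma tangentialDeriv_rotationRate (hγ : ContDiff ℝ 3 γ) (hreg : ∀ q, 0 < speed γ q)
    (q : ℝ × ℝ) :
    tangentialDeriv γ (rotationRate γ) q
      = -dotp (unitNormal γ q) (tangentialDeriv γ (tangentialDeriv γ (velocity γ)) q)
        - curvature γ q * stretchRate γ q := by
  have hγ₂ : ContDiff ℝ 2 γ := hγ.of_le (by norm_num)
  have hu : ContDiff ℝ 1 (tangentialDeriv γ (velocity γ)) :=
    contDiff_tangentialDeriv_velocity hγ hreg (by norm_num)
  rw [show rotationRate γ = _ from funext (rotationRate_eq_neg_dotp hγ₂ hreg),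
    tangentialDeriv_neg, tangentialDeriv_dotp (hu.differentiable one_ne_zero q)
      (differentiable_unitNormal hγ₂ hreg q),
    tangentialDeriv_unitNormal hγ₂ hreg, stretchRate, dotp_smul_right,
    dotp_comm (unitNormal γ q)]
  ring

lemma timeDeriv_stretchRate (hγ : ContDiff ℝ 3 γ) (hreg : ∀ q, 0 < speed γ q) (q : ℝ × ℝ) :
    timeDeriv (stretchRate γ) q
      = dotp (tangentialDeriv γ (timeDeriv (velocity γ)) q) (unitTangent γ q)
        - stretchRate γ q ^ 2 + rotationRate γ q ^ 2 := by
  have hγ₂ : ContDiff ℝ 2 γ := hγ.of_le (by norm_num)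
  have hu : ContDiff ℝ 1 (tangentialDeriv γ (velocity γ)) :=
    contDiff_tangentialDeriv_velocity hγ hreg (by norm_num)
  refine (timeDeriv_dotp (hu.differentiable one_ne_zero q)
    (differentiable_unitTangent hγ₂ hreg q)).trans ?_
  rw [timeDeriv_tangentialDeriv hγ₂ hreg (contDiff_velocity hγ (by norm_num)),
    timeDeriv_unitTangent hγ₂ hreg, dotp_sub_left, dotp_smul_left, dotp_smul_right,
    rotationRate_eq_neg_dotp hγ₂ hreg, stretchRate]
  ring

lemma timeDeriv_rotationRate (hγ : ContDiff ℝ 3 γ) (hreg : ∀ q, 0 < speed γ q) (q : ℝ × ℝ) :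
    timeDeriv (rotationRate γ) q
      = -(dotp (tangentialDeriv γ (timeDeriv (velocity γ)) q) (unitNormal γ q)
          + (2 * stretchRate γ q) * rotationRate γ q) := by
  have hγ₂ : ContDiff ℝ 2 γ := hγ.of_le (by norm_num)
  have hu : ContDiff ℝ 1 (tangentialDeriv γ (velocity γ)) :=
    contDiff_tangentialDeriv_velocity hγ hreg (by norm_num)
  rw [show rotationRate γ = _ from funext (rotationRate_eq_neg_dotp hγ₂ hreg),
    timeDeriv_neg, timeDeriv_dotp (hu.differentiable one_ne_zero q)
      (differentiable_unitNormal hγ₂ hreg q),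
    timeDeriv_tangentialDeriv hγ₂ hreg (contDiff_velocity hγ (by norm_num)),
    timeDeriv_unitNormal hγ₂ hreg, dotp_sub_left, dotp_smul_left, dotp_smul_right,
    rotationRate_eq_neg_dotp hγ₂ hreg, ← stretchRate]
  ring

lemma timeDeriv_curvature (hγ : ContDiff ℝ 3 γ) (hreg : ∀ q, 0 < speed γ q) (q : ℝ × ℝ) :
    timeDeriv (curvature γ) q
      = tangentialDeriv γ (rotationRate γ) q - curvature γ q * stretchRate γ q := by
  have hγ₂ : ContDiff ℝ 2 γ := hγ.of_le (by norm_num)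
  have hn : ContDiff ℝ 2 (unitNormal γ) := contDiff_unitNormal hγ hreg (by norm_num)
  have hω : ContDiff ℝ 1 (rotationRate γ) := contDiff_rotationRate hγ hreg (by norm_num)
  have hn' : ContDiff ℝ 1 (tangentialDeriv γ (unitNormal γ)) :=
    contDiff_tangentialDeriv hγ₂ hreg hn (by norm_num)
  refine (timeDeriv_dotp (hn'.differentiable one_ne_zero q)
    (differentiable_unitTangent hγ₂ hreg q)).trans ?_
  rw [timeDeriv_tangentialDeriv hγ₂ hreg hn,
    show timeDeriv (unitNormal γ) = _ from funext (timeDeriv_unitNormal hγ₂ hreg),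
    tangentialDeriv_smul (hω.differentiable one_ne_zero q)
      (differentiable_unitTangent hγ₂ hreg q),
    tangentialDeriv_unitNormal hγ₂ hreg, tangentialDeriv_unitTangent hγ₂ hreg,
    timeDeriv_unitTangent hγ₂ hreg]
  simp only [dotp_sub_left, dotp_add_left, dotp_smul_left, dotp_smul_right,
    dotp_unitTangent_self (hreg q), dotp_unitNormal_unitTangent, dotp_unitTangent_unitNormal]
  ring

lemma tangentialDeriv_tangentialDeriv_dotp_unitNormal {f : ℝ × ℝ → ℝ × ℝ} (hγ : ContDiff ℝ 3 γ)
    (hreg : ∀ q, 0 < speed γ q) (hf : ContDiff ℝ 2 f) (q : ℝ × ℝ) :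
    tangentialDeriv γ (tangentialDeriv γ fun q' => dotp (f q') (unitNormal γ q')) q
      = tangentialDeriv γ (fun q' => dotp (tangentialDeriv γ f q') (unitNormal γ q')) q
        + tangentialDeriv γ (curvature γ) q * dotp (f q) (unitTangent γ q)
        + curvature γ q * dotp (tangentialDeriv γ f q) (unitTangent γ q)
        - curvature γ q ^ 2 * dotp (f q) (unitNormal γ q) := by
  have hγ₂ : ContDiff ℝ 2 γ := hγ.of_le (by norm_num)
  have hτ := differentiable_unitTangent hγ₂ hreg
  have hn := differentiable_unitNormal hγ₂ hreg
  have hf₁ := hf.differentiable two_ne_zero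
  have hf' : ContDiff ℝ 1 (tangentialDeriv γ f) :=
    contDiff_tangentialDeriv hγ₂ hreg hf (by norm_num)
  have hκ : ContDiff ℝ 1 (curvature γ) := contDiff_curvature hγ hreg (by norm_num)
  have hfirst : (tangentialDeriv γ fun q' => dotp (f q') (unitNormal γ q')) = fun q' =>
      dotp (tangentialDeriv γ f q') (unitNormal γ q')
        + curvature γ q' * dotp (f q') (unitTangent γ q') := by
    funext q'
    rw [tangentialDeriv_dotp (hf₁ q') (hn q'), tangentialDeriv_unitNormal hγ₂ hreg,
      dotp_smul_right]
  rw [hfirst, tangentialDeriv_add (differentiableAt_dotp (hf'.differentiable one_ne_zero q) (hn q))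
      ((hκ.differentiable one_ne_zero q).fun_mul (differentiableAt_dotp (hf₁ q) (hτ q))),
    tangentialDeriv_mul (hκ.differentiable one_ne_zero q) (differentiableAt_dotp (hf₁ q) (hτ q)),
    tangentialDeriv_dotp (hf₁ q) (hτ q), tangentialDeriv_unitTangent hγ₂ hreg, dotp_smul_right]
  ring

lemma tangentialDeriv_timeDeriv_rotationRate (hγ : ContDiff ℝ 4 γ)
    (hreg : ∀ q, 0 < speed γ q) (q : ℝ × ℝ) :
    tangentialDeriv γ (timeDeriv (rotationRate γ)) q
      = -tangentialDeriv γ (fun q' =>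
            dotp (tangentialDeriv γ (timeDeriv (velocity γ)) q') (unitNormal γ q')) q
        - 2 * tangentialDeriv γ (stretchRate γ) q * rotationRate γ q
        - 2 * stretchRate γ q * tangentialDeriv γ (rotationRate γ) q := by
  have hγ₃ : ContDiff ℝ 3 γ := hγ.of_le (by norm_num)
  have hacc : ContDiff ℝ 2 (timeDeriv (velocity γ)) :=
    contDiff_timeDeriv (contDiff_velocity (m := 3) hγ (by norm_num)) (by norm_num)
  have hacc' : ContDiff ℝ 1 (tangentialDeriv γ (timeDeriv (velocity γ))) :=
    contDiff_tangentialDeriv (hγ.of_le (by norm_num)) hreg hacc (by norm_num)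
  have hn := differentiable_unitNormal (hγ.of_le (by norm_num)) hreg
  have hA : DifferentiableAt ℝ (stretchRate γ) q :=
    (contDiff_stretchRate (m := 1) hγ₃ hreg (by norm_num)).differentiable one_ne_zero q
  have hω : DifferentiableAt ℝ (rotationRate γ) q :=
    (contDiff_rotationRate (m := 1) hγ₃ hreg (by norm_num)).differentiable one_ne_zero q
  rw [show timeDeriv (rotationRate γ) = _ from funext (timeDeriv_rotationRate hγ₃ hreg),
    tangentialDeriv_neg,
    tangentialDeriv_add (differentiableAt_dotp (hacc'.differentiable one_ne_zero q) (hn q))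
      ((hA.const_mul 2).fun_mul hω),
    tangentialDeriv_mul (hA.const_mul 2) hω, tangentialDeriv_const_mul]
  ring

lemma timeDeriv_timeDeriv_curvature (hγ : ContDiff ℝ 4 γ) (hreg : ∀ q, 0 < speed γ q)
    (q : ℝ × ℝ) :
    timeDeriv (timeDeriv (curvature γ)) q
      = tangentialDeriv γ (timeDeriv (rotationRate γ)) q
        - stretchRate γ q * tangentialDeriv γ (rotationRate γ) q
        - (timeDeriv (curvature γ) q * stretchRate γ q
          + curvature γ q * timeDeriv (stretchRate γ) q) := by
  have hγ₂ : ContDiff ℝ 2 γ := hγ.of_le (by norm_num)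
  have hγ₃ : ContDiff ℝ 3 γ := hγ.of_le (by norm_num)
  have hω : ContDiff ℝ 2 (rotationRate γ) := contDiff_rotationRate hγ hreg (by norm_num)
  have hω' : ContDiff ℝ 1 (tangentialDeriv γ (rotationRate γ)) :=
    contDiff_tangentialDeriv hγ₂ hreg hω (by norm_num)
  have hκ : DifferentiableAt ℝ (curvature γ) q :=
    (contDiff_curvature (m := 1) hγ₃ hreg (by norm_num)).differentiable one_ne_zero q
  have hA : DifferentiableAt ℝ (stretchRate γ) q :=
    (contDiff_stretchRate (m := 1) hγ₃ hreg (by norm_num)).differentiable one_ne_zero q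
  conv_lhs => rw [show timeDeriv (curvature γ) = _ from funext (timeDeriv_curvature hγ₃ hreg)]
  rw [timeDeriv_sub (hω'.differentiable one_ne_zero q) (hκ.fun_mul hA),
    timeDeriv_tangentialDeriv hγ₂ hreg hω, timeDeriv_mul hκ hA, smul_eq_mul]

end Evolution

end EvolvingCurve

open EvolvingCurve in
theorem second_order_evolution_of_curvature_general {γ : ℝ × ℝ → ℝ × ℝ} (hγ : ContDiff ℝ 4 γ)
    (hreg : ∀ q, 0 < speed γ q) (q : ℝ × ℝ) :
    timeDeriv (timeDeriv (curvature γ)) q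
      = -tangentialDeriv γ (tangentialDeriv γ fun q' =>
            dotp (timeDeriv (velocity γ) q') (unitNormal γ q')) q
        + tangentialDeriv γ (curvature γ) q * dotp (unitTangent γ q) (timeDeriv (velocity γ) q)
        - curvature γ q ^ 2 * dotp (unitNormal γ q) (timeDeriv (velocity γ) q)
        + 2 * dotp (tangentialDeriv γ (velocity γ) q) (unitNormal γ q)
            * dotp (unitTangent γ q) (tangentialDeriv γ (tangentialDeriv γ (velocity γ)) q)
        + 4 * dotp (tangentialDeriv γ (velocity γ) q) (unitTangent γ q)
            * dotp (unitNormal γ q) (tangentialDeriv γ (tangentialDeriv γ (velocity γ)) q)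
        + 6 * curvature γ q * dotp (tangentialDeriv γ (velocity γ) q) (unitTangent γ q) ^ 2
        - 3 * curvature γ q * dotp (tangentialDeriv γ (velocity γ) q) (unitNormal γ q) ^ 2 := by
  have hγ₃ : ContDiff ℝ 3 γ := hγ.of_le (by norm_num)
  have hacc : ContDiff ℝ 2 (timeDeriv (velocity γ)) :=
    contDiff_timeDeriv (contDiff_velocity (m := 3) hγ (by norm_num)) (by norm_num)
  have hω : dotp (tangentialDeriv γ (velocity γ) q) (unitNormal γ q) = -rotationRate γ q := by
    rw [rotationRate_eq_neg_dotp (hγ.of_le (by norm_num)) hreg, neg_neg]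
  rw [timeDeriv_timeDeriv_curvature hγ hreg, tangentialDeriv_timeDeriv_rotationRate hγ hreg,
    timeDeriv_curvature hγ₃ hreg, timeDeriv_stretchRate hγ₃ hreg,
    tangentialDeriv_stretchRate hγ₃ hreg, tangentialDeriv_rotationRate hγ₃ hreg,
    tangentialDeriv_tangentialDeriv_dotp_unitNormal hγ₃ hreg hacc, hω, ← stretchRate,
    dotp_comm (unitTangent γ q) (timeDeriv (velocity γ) q),
    dotp_comm (unitNormal γ q) (timeDeriv (velocity γ) q)]
  ring

/-- Second-order evolution equation for the signed curvature of a moving regular plane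
curve under an arbitrary evolution velocity `u = ∂_tγ`:
`𝒟_t𝒟_t κ = −∇_τ∇_τ(𝒟_t u · n) + (∇_τ κ)(τ·𝒟_t u) − κ²(n·𝒟_t u)
  + 2(∇_τ u·n)(τ·∇_τ∇_τ u) + 4(∇_τ u·τ)(n·∇_τ∇_τ u) + 6κ(∇_τ u·τ)² − 3κ(∇_τ u·n)²`,
where `σ = ‖∂_sγ‖`, `τ = σ⁻¹∂_sγ`, `n = (τ², −τ¹)`, `κ = (∇_τ n)·τ`, and
`∇_τ f = σ⁻¹∂_s f`. -/
theorem second_order_evolution_of_curvature (γ : ℝ × ℝ → ℝ × ℝ) (hγ : ContDiff ℝ (⊤ : ℕ∞) γ)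
    (σ : ℝ × ℝ → ℝ)
    (hσ : ∀ q, σ q = Real.sqrt ((psd γ q).1 ^ 2 + (psd γ q).2 ^ 2))
    (hσpos : ∀ q, 0 < σ q)
    (τ n u : ℝ × ℝ → ℝ × ℝ) (κ : ℝ × ℝ → ℝ)
    (hτ : ∀ q, τ q = (σ q)⁻¹ • psd γ q)
    (hn : ∀ q, n q = ((τ q).2, -(τ q).1))
    (hκ : ∀ q, κ q = dotp ((σ q)⁻¹ • psd n q) (τ q))
    (hu : ∀ q, u q = ptd γ q) :
    ∀ q, ptds (fun q' => ptds κ q') q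
      = -((σ q)⁻¹ * psds (fun q' =>
            (σ q')⁻¹ * psds (fun q'' => dotp (ptd u q'') (n q'')) q') q)
        + ((σ q)⁻¹ * psds κ q) * dotp (τ q) (ptd u q)
        - (κ q) ^ 2 * dotp (n q) (ptd u q)
        + 2 * dotp ((σ q)⁻¹ • psd u q) (n q)
            * dotp (τ q) ((σ q)⁻¹ • psd (fun q' => (σ q')⁻¹ • psd u q') q)
        + 4 * dotp ((σ q)⁻¹ • psd u q) (τ q)
            * dotp (n q) ((σ q)⁻¹ • psd (fun q' => (σ q')⁻¹ • psd u q') q)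
        + 6 * κ q * (dotp ((σ q)⁻¹ • psd u q) (τ q)) ^ 2
        - 3 * κ q * (dotp ((σ q)⁻¹ • psd u q) (n q)) ^ 2 := by
  obtain rfl : σ = EvolvingCurve.speed γ := funext hσ
  obtain rfl : τ = EvolvingCurve.unitTangent γ := funext hτ
  obtain rfl : n = EvolvingCurve.unitNormal γ := funext hn
  obtain rfl : κ = EvolvingCurve.curvature γ := funext hκ
  obtain rfl : u = EvolvingCurve.velocity γ := funext hu
  exact second_order_evolution_of_curvature_general (contDiff_infty.mp hγ 4) hσpos
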